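/- Let α be a partition with all parts at least 2 and overlapping partition p. Then R_α^p has full Schur support, i.e. [R_α^p] = [α, (|α|−p_1, p_1)], if and only if either ℓ(p) < 2, or ℓ(p) ≥ 2 and for every 1 ≤ i ≤ ℓ(p)−1 the i-witness vector is oversized with respect to its slack: Σ_{j=1}^i max(0, ϱ_i − α_j) ≥ p_{i+1}. -/

import Mathlib

namespace RibbonSupport

/-- A partition: a weakly decreasing list of positive integers. -/
def IsPartition (a : List ℕ) : Prop := a.Pairwise (· ≥ ·) ∧ ∀ x ∈ a, 0 < x

/-- All parts of the list are at least `m`. -/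
def PartsGE (a : List ℕ) (m : ℕ) : Prop := ∀ x ∈ a, m ≤ x

/-- Dominance order `lam ⪯ mu` on partitions of the same size. -/
def DomLE (lam mu : List ℕ) : Prop :=
  lam.sum = mu.sum ∧ ∀ i, (lam.take i).sum ≤ (mu.take i).sum

/-- The number of nonzero parts. -/
def lenp (p : List ℕ) : ℕ := p.countP (fun x => decide (x ≠ 0))

/-- `p` is an overlapping partition for the monotone ribbon with row lengths `a`:
`p` has the same length as `a`, its last entry is `0`, and consecutive entries
decrease by `0` or `1`. -/
def IsOverlapSeq (a p : List ℕ) : Prop :=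
  p.length = a.length ∧ p.getD (a.length - 1) 0 = 0 ∧
    ∀ i, i + 1 < a.length →
      p.getD i 0 = p.getD (i + 1) 0 ∨ p.getD i 0 = p.getD (i + 1) 0 + 1

/-- Rows `i` and `i+1` (0-based, top to bottom) of `R_a^p` overlap
(share exactly one column) exactly when `p_i = p_{i+1} + 1`. -/
def ovOf (p : List ℕ) : ℕ → Bool := fun i => decide (p.getD i 0 = p.getD (i + 1) 0 + 1)

def rowOffset (a : List ℕ) (i : ℕ) : ℕ := (a.take i).sum

/-- `w` is the reading word (rows right-to-left, top to bottom) of a semistandard filling of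
the ribbon with row lengths `a` (top to bottom) in which consecutive rows `i`, `i+1` share
exactly one column when `ov i = true` and no column otherwise.  Semistandardness amounts to:
within each row block the word is weakly decreasing (rows weakly increase left to right), and
at each overlapping gap the word strictly increases (columns strictly increase downwards). -/
def IsRibbonWord (a : List ℕ) (ov : ℕ → Bool) (w : List ℕ) : Prop :=
  w.length = a.sum ∧
  (∀ i j, i < a.length → j + 1 < a.getD i 0 →
    w.getD (rowOffset a i + j + 1) 0 ≤ w.getD (rowOffset a i + j) 0) ∧
  (∀ i, i + 1 < a.length → ov i = true →
    w.getD (rowOffset a (i + 1) - 1) 0 < w.getD (rowOffset a (i + 1)) 0)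

/-- Yamanouchi (lattice) word: each prefix has at least as many letters `j` as `j+1`. -/
def IsYam (w : List ℕ) : Prop := ∀ k j, (w.take k).count (j + 2) ≤ (w.take k).count (j + 1)

/-- The word `w` has content `nu` (and only positive letters). -/
def HasContent (w : List ℕ) (nu : List ℕ) : Prop :=
  (∀ j, w.count (j + 1) = nu.getD j 0) ∧ w.count 0 = 0

/-- There is an LR filling of the ribbon `(a, ov)` with content `nu`. -/
def InSupportOv (a : List ℕ) (ov : ℕ → Bool) (nu : List ℕ) : Prop :=
  ∃ w : List ℕ, IsRibbonWord a ov w ∧ IsYam w ∧ HasContent w nu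

/-- `nu` is in the Schur support of the monotone ribbon `R_a^p`. -/
def InSupport (a p nu : List ℕ) : Prop := InSupportOv a (ovOf p) nu

/-- `nu` is in the Schur support of the connected ribbon `R_a`. -/
def InSupportConn (a nu : List ℕ) : Prop := InSupportOv a (fun _ => true) nu

/-- `nu` belongs to the Schur interval `[a, (|a| - p₁, p₁)]` in dominance order. -/
def InInterval (a p nu : List ℕ) : Prop :=
  DomLE a nu ∧ DomLE nu [a.sum - p.getD 0 0, p.getD 0 0]

/-- The Schur support of `R_a^p`, as a set of partitions. -/
def SupportSet (a p : List ℕ) : Set (List ℕ) := {nu | IsPartition nu ∧ InSupport a p nu}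

/-- The Schur interval of `R_a^p`, as a set of partitions. -/
def IntervalSet (a p : List ℕ) : Set (List ℕ) := {nu | IsPartition nu ∧ InInterval a p nu}

/-- `R_a^p` has full Schur support. -/
def FullSupport (a p : List ℕ) : Prop := SupportSet a p = IntervalSet a p

/-- The Schur support of the connected ribbon `R_a`, as a set of partitions. -/
def SupportSetConn (a : List ℕ) : Set (List ℕ) := {nu | IsPartition nu ∧ InSupportConn a nu}

/-- `ϱ_i` (1-based `i`): `Σ_{q=i+1}^{ℓ(a)} a_q − p_{i+1} + 1`. -/
def rho (a p : List ℕ) (i : ℕ) : ℕ := (a.drop i).sum + 1 - p.getD i 0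

/-- Entry `j` (1-based) of the `i`-witness vector: `[ϱ_i − a_j]₊`. -/
def wit (a p : List ℕ) (i j : ℕ) : ℕ := rho a p i - a.getD (j - 1) 0

/-- Size of the `i`-witness vector. -/
def witSize (a p : List ℕ) (i : ℕ) : ℕ := ∑ j ∈ Finset.Icc 1 i, wit a p i j

/-! ### Tableaux -/

/-- Cells (0-based `(row, column)`) of the Young diagram of `lam`. -/
def cells (lam : List ℕ) : Finset (ℕ × ℕ) :=
  (Finset.range lam.length ×ˢ Finset.range (lam.sum + 1)).filter
    (fun x => x.2 < lam.getD x.1 0)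

/-- `T` is a semistandard Young tableau of shape `lam` and content `al`
(normalized to vanish off the diagram). -/
def IsTab (lam al : List ℕ) (T : ℕ × ℕ → ℕ) : Prop :=
  (∀ x, x ∉ cells lam → T x = 0) ∧
  (∀ x ∈ cells lam, 1 ≤ T x) ∧
  (∀ i c, (i, c + 1) ∈ cells lam → T (i, c) ≤ T (i, c + 1)) ∧
  (∀ i c, (i + 1, c) ∈ cells lam → T (i, c) < T (i + 1, c)) ∧
  (∀ k, ((cells lam).filter (fun x => T x = k + 1)).card = al.getD k 0)

/-- Standardization of a tableau: entries are renumbered `1, …, N` in increasing order of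
value, entries of equal value being numbered from southwest to northeast (by column). -/
def stdz (lam : List ℕ) (T : ℕ × ℕ → ℕ) : ℕ × ℕ → ℕ := fun x =>
  if x ∈ cells lam then
    ((cells lam).filter (fun y => T y < T x ∨ (T y = T x ∧ y.2 < x.2))).card + 1
  else 0

/-- `n` is a descent of the standard tableau `U`: the entry `n+1` lies in a strictly
lower row than the entry `n`. -/
def IsDescent (lam : List ℕ) (U : ℕ × ℕ → ℕ) (n : ℕ) : Prop :=
  ∃ x ∈ cells lam, ∃ y ∈ cells lam, U x = n ∧ U y = n + 1 ∧ x.1 < y.1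

/-- `S(al)`: the set of proper partial sums of the composition `al`. -/
def Sset (al : List ℕ) : Set ℕ := {n | ∃ k, 0 < k ∧ k < al.length ∧ n = (al.take k).sum}

/-- `s ∈ D(T)`: some entry `s+1` of `T` lies in a strictly lower row than some entry `s`. -/
def TabDescent (lam : List ℕ) (T : ℕ × ℕ → ℕ) (s : ℕ) : Prop :=
  ∃ x ∈ cells lam, ∃ y ∈ cells lam, T x = s ∧ T y = s + 1 ∧ x.1 < y.1

/-- The word `w_{T̂}` of `T`: its `u`-th letter (1-based) is the 1-based row index of the
entry `u` of the standardization `T̂` of `T`. -/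
def wordOf (lam : List ℕ) (T : ℕ × ℕ → ℕ) : List ℕ :=
  (List.range lam.sum).map fun n =>
    ∑ x ∈ (cells lam).filter (fun x => stdz lam T x = n + 1), (x.1 + 1)

/-- `j ∈ {2, …, ℓ(al)}` is a critical number of `T ∈ Tab(lam, al)`:
`w_{α_1+⋯+α_{j-1}} = w_{α_1+⋯+α_{j-1}+1}` in the word of `T`. -/
def CriticalNum (lam al : List ℕ) (T : ℕ × ℕ → ℕ) (j : ℕ) : Prop :=
  2 ≤ j ∧ j ≤ al.length ∧
    (wordOf lam T).getD ((al.take (j - 1)).sum - 1) 0 =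
      (wordOf lam T).getD ((al.take (j - 1)).sum) 0

/-- `j ∈ {2, …, ℓ(al)}` is a negligible critical number of `T`:
`w_{α_1+⋯+α_{j-1}} > w_{α_1+⋯+α_{j-1}+1}` in the word of `T`. -/
def NegligibleNum (lam al : List ℕ) (T : ℕ × ℕ → ℕ) (j : ℕ) : Prop :=
  2 ≤ j ∧ j ≤ al.length ∧
    (wordOf lam T).getD ((al.take (j - 1)).sum) 0 <
      (wordOf lam T).getD ((al.take (j - 1)).sum - 1) 0

/-- The overlapping partition of the ribbon encoded by its gap pattern `b`
(`b j = true` iff rows `j` and `j+1`, 0-based, overlap). -/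
def povOf (b : List Bool) : List ℕ :=
  (List.range (b.length + 1)).map fun i => (b.drop i).count true

/-! ### Connected ribbons with rows in arbitrary order -/

/-- Starting column (0-based) of row `i` of the connected ribbon with row lengths `b`. -/
def startConn (b : List ℕ) (i : ℕ) : ℕ := (b.drop (i + 1)).sum + (i + 1) - b.length

/-- Number of columns of the connected ribbon with row lengths `b`. -/
def ncols (b : List ℕ) : ℕ := b.sum + 1 - b.length

/-- Length of column `c` of the connected ribbon with row lengths `b`. -/
def colLen (b : List ℕ) (c : ℕ) : ℕ :=
  ((Finset.range b.length).filter
    (fun i => startConn b i ≤ c ∧ c < startConn b i + b.getD i 0)).card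

/-- Deletion rank of row `j`: the number of rows deleted strictly before row `j` when one
repeatedly deletes a longest remaining row in highest (most northern) position. -/
def delRank (g : List ℕ) (j : ℕ) : ℕ :=
  ((Finset.range g.length).filter
    (fun j' => g.getD j 0 < g.getD j' 0 ∨ (g.getD j' 0 = g.getD j 0 ∧ j' < j))).card

/-- The overlapping partition of the connected ribbon with row lengths `g`:
its `(d+1)`-st entry is the number of length-two columns of the ribbon remaining
after deleting `d` rows as above, i.e. the number of adjacent pairs of surviving rows. -/
def ppiList (g : List ℕ) : List ℕ :=
  (List.range g.length).map fun d =>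
    ((Finset.range (g.length - 1)).filter
      (fun j => d ≤ delRank g j ∧ d ≤ delRank g (j + 1))).card


section helpers
open Finset

/-- strip removal: lowest strip of size `y` ending in row `k`, plus `c` boxes from row `i`. -/
def mk (v : ℕ → ℕ) (k y i c : ℕ) (j : ℕ) : ℕ :=
  (if j < k then v j else if j = k then v k + v (k+1) - y else v (j+1)) - (if j = i then c else 0)

lemma mk_inter (v : ℕ → ℕ) (hv : Antitone v) (k y i c : ℕ) (h1 : v (k+1) ≤ y) (h2 : y ≤ v k)
    (h3 : c = 0 ∨ (i < k ∧ c + v (i+1) ≤ v i)) (j : ℕ) :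
    v (j+1) ≤ mk v k y i c j ∧ mk v k y i c j ≤ v j := by
  have := hv (Nat.le_succ j)
  unfold mk
  simp only [Nat.succ_eq_add_one] at this
  rcases h3 with h3 | ⟨h3, h4⟩
  · subst h3
    split_ifs <;> first | omega | (subst_vars; omega)
  · split_ifs <;> first | omega | (subst_vars; omega)

lemma mk_sum_le (v : ℕ → ℕ) (k y i c m : ℕ) (hm : m ≤ k) (h : m ≤ i ∨ c = 0) :
    ∑ j ∈ range m, mk v k y i c j = ∑ j ∈ range m, v j := by
  apply Finset.sum_congr rfl
  intro j hj
  rw [Finset.mem_range] at hj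
  unfold mk
  split_ifs <;> omega

lemma mk_sum_mid (v : ℕ → ℕ) (k y i c m : ℕ) (hm : m ≤ k) (h : i < m) (hc : c ≤ v i) :
    ∑ j ∈ range m, mk v k y i c j + c = ∑ j ∈ range m, v j := by
  induction m with
  | zero => omega
  | succ m ih =>
    rw [Finset.sum_range_succ, Finset.sum_range_succ]
    by_cases him : i = m
    · subst him
      rw [mk_sum_le v k y i c i (by omega) (by omega)]
      unfold mk
      split_ifs <;> omega
    · have := ih (by omega) (by omega)
      have : mk v k y i c m = v m := by unfold mk; split_ifs <;> omega
      omega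

lemma mk_sum_gt (v : ℕ → ℕ) (k y i c m : ℕ) (hm : k < m) (h2 : y ≤ v k)
    (h : c = 0 ∨ (i < k ∧ c ≤ v i)) :
    ∑ j ∈ range m, mk v k y i c j + c + y = ∑ j ∈ range (m+1), v j := by
  induction m with
  | zero => omega
  | succ m ih =>
    rw [Finset.sum_range_succ, Finset.sum_range_succ _ (m+1)]
    by_cases hkm : k = m
    · subst hkm
      have e1 : ∑ j ∈ range k, mk v k y i c j + c = ∑ j ∈ range k, v j := by
        rcases h with h | h
        · rw [mk_sum_le v k y i c k le_rfl (Or.inr h)]; omega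
        · exact mk_sum_mid v k y i c k le_rfl h.1 h.2
      rw [Finset.sum_range_succ]
      have : mk v k y i c k = v k + v (k+1) - y := by unfold mk; split_ifs <;> omega
      omega
    · have := ih (by omega)
      have : mk v k y i c m = v (m+1) := by unfold mk; split_ifs <;> omega
      omega

lemma exists_k (v : ℕ → ℕ) (n : ℕ) (hn : ∀ i, i < n ↔ 0 < v i) (y i0 : ℕ)
    (h : y ≤ v i0) (hi : i0 ≤ n) :
    ∃ k, i0 ≤ k ∧ k ≤ n ∧ v (k+1) ≤ y ∧ y ≤ v k ∧ (0 < y → v (k+1) < y ∧ k < n) := by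
  rcases Nat.eq_zero_or_pos y with rfl | hy
  · refine ⟨n, hi, le_rfl, ?_, by omega, by omega⟩
    have := (hn (n+1)).not.1 (by omega)
    omega
  · have hex : ∃ k, i0 ≤ k ∧ v (k+1) < y := by
      refine ⟨n, hi, ?_⟩
      have := (hn (n+1)).not.1 (by omega)
      omega
    classical
    obtain ⟨h1, h2⟩ := Nat.find_spec hex
    have hmin := fun m (hm : m < Nat.find hex) => Nat.find_min hex hm
    set k := Nat.find hex
    have hyk : y ≤ v k := by
      by_cases e : k = i0
      · rw [e]; exact h
      · have := hmin (k-1) (by omega)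
        have e2 : k - 1 + 1 = k := by omega
        rw [e2] at this
        by_contra hc
        exact this ⟨by omega, by omega⟩
    have hkn : k < n := (hn k).2 (by omega)
    exact ⟨k, h1, by omega, by omega, hyk, fun _ => ⟨h2, hkn⟩⟩

lemma step (L n x o : ℕ) (D P Q v : ℕ → ℕ) (f : Prop)
    (hDm : Monotone D)
    (hD : ∀ m < L, D m + x ≤ D (m+1)) (hx : 2 ≤ x) (hDL : D (L+1) = D L + x)
    (hP : ∀ i < L, P i + i + 1 ≤ L) (hQ : ∀ i < L, Q i = P i + o)
    (ho0 : o ≤ 1 ∧ (L = 0 → o = 0))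
    (hv : Antitone v) (hn : ∀ i, i < n ↔ 0 < v i)
    (htot : ∑ i ∈ range n, v i = D (L+1))
    (hdom : ∀ m ≤ L+1, D m ≤ ∑ i ∈ range m, v i)
    (hB : ∀ i < L, v i + Q i + D i ≤ D (L+1))
    (hf : f → 2 ≤ n ∧ v (n-1) < v (n-2) ∧ v (n-1) + Q (n-1) + 1 + D (n-1) ≤ D (L+1)) :
    ∃ v' : ℕ → ℕ, (∀ i, v (i+1) ≤ v' i ∧ v' i ≤ v i) ∧
      ∑ i ∈ range n, v' i = D L ∧ (∀ m ≤ L, D m ≤ ∑ i ∈ range m, v' i) ∧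
      (∀ i < L, v' i + P i + D i ≤ D L) ∧
      (o = 1 → v' (n-1) < v (n-1) ∧
        (0 < v' (n-1) → 2 ≤ n ∧ v' (n-1) < v' (n-2) ∧ v' (n-1) + P (n-1) + 1 + D (n-1) ≤ D L)) ∧
      (f → ∃ j < n-1, v' j < v j) := by
  obtain ⟨ho1, ho0⟩ := ho0
  -- basic facts
  have hzero : ∀ i, n ≤ i → v i = 0 := fun i hi => by
    have := (hn i).not.1 (by omega); omega
  have htot' : ∀ m, n ≤ m → ∑ i ∈ range m, v i = D (L+1) := by
    intro m hm
    rw [← htot]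
    symm
    apply Finset.sum_subset (Finset.range_mono hm)
    intro j _ hj
    exact hzero j (by simpa using hj)
  have hle : ∀ m, ∑ i ∈ range m, v i ≤ D (L+1) := by
    intro m
    rw [← htot' (max n m) (by omega)]
    exact Finset.sum_le_sum_of_subset (Finset.range_mono (by omega))
  have hn1 : 1 ≤ n := by
    by_contra hc
    have : n = 0 := by omega
    subst this
    simp at htot
    omega
  have hnL : n ≤ L + 1 := by
    by_contra hc
    have h1 := hdom (L+1) le_rfl
    have h2 := hle (L+2)
    rw [Finset.sum_range_succ] at h2
    have := (hn (L+1)).1 (by omega)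
    omega
  have hD2 : ∀ t j, j + t ≤ L → D j + 2 * t ≤ D (j+t) := by
    intro t
    induction t with
    | zero => intro j _; simp
    | succ t ih =>
      intro j hj
      have h1 := ih j (by omega)
      have h2 := hD (j+t) (by omega)
      rw [← add_assoc]
      omega
  have hD3 : ∀ j < L, D j + x + 2 * (L - 1 - j) ≤ D L := by
    intro j hj
    have h1 := hD j hj
    have h2 := hD2 (L-1-j) (j+1) (by omega)
    have e : j + 1 + (L-1-j) = L := by omega
    rw [e] at h2
    omega
  -- growth of partial sums over positive rows
  have hgrow : ∀ (u : ℕ → ℕ) (s t : ℕ), (∀ j, s ≤ j → j < s + t → 0 < u j) →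
      ∑ i ∈ range s, u i + t ≤ ∑ i ∈ range (s+t), u i := by
    intro u s t
    induction t with
    | zero => intro _; simp
    | succ t ih =>
      intro h
      have h1 := ih (fun j h1 h2 => h j h1 (by omega))
      have h2 := h (s+t) (by omega) (by omega)
      rw [← add_assoc s t 1, Finset.sum_range_succ]
      omega
  -- at most one violated row
  have hone : ∀ i j, i < j → j < L → D L < v i + P i + D i → D L < v j + P j + D j → False := by
    intro i j hij hj h1 h2
    have a1 := hdom i (by omega)
    have a2 := hle (j+1)
    rw [Finset.sum_range_succ] at a2
    have hP1 := hP i (by omega)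
    have hP2 := hP j (by omega)
    have a4 := hD3 j hj
    have a5 := hD3 i (by omega)
    have a3 : ∑ i ∈ range (i+1), v i + (j - i - 1) ≤ ∑ i ∈ range j, v i := by
      have := hgrow v (i+1) (j-i-1) (fun q _ hq => by
        have := hv (show q ≤ j by omega)
        omega)
      have e : i + 1 + (j-i-1) = j := by omega
      rwa [e] at this
    rw [Finset.sum_range_succ] at a3
    omega
  have hadj : ∀ i < L, v (i+1) + P i + D i ≤ D L := by
    intro i hi
    by_contra hc
    have h1 := hv (Nat.le_succ i)
    simp only [Nat.succ_eq_add_one] at h1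
    have a1 := hdom i (by omega)
    have a2 := hle (i+2)
    rw [Finset.sum_range_succ, Finset.sum_range_succ] at a2
    have := hP i hi
    have := hD3 i hi
    omega
  have hx0 : x ≤ v 0 := by
    have a1 := hdom 1 (by omega)
    simp at a1
    rcases Nat.eq_zero_or_pos L with h | h
    · subst h; simp at hDL; omega
    · have := hD 0 h; simp at this; omega
  obtain ⟨k, -, -, hk1, hk2, hk3⟩ := exists_k v n hn x 0 hx0 (by omega)
  obtain ⟨hk1, hkn⟩ := hk3 (by omega)
  have hmkle : ∀ j, mk v k x 0 0 j ≤ v j := fun j =>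
    (mk_inter v hv k x 0 0 (by omega) hk2 (Or.inl rfl) j).2
  by_cases hviol : ∃ i < L, D L < mk v k x 0 0 i + P i + D i
  · -- violation
    obtain ⟨i, hiL, hi⟩ := hviol
    have hik : i ≤ k := by
      by_contra hc
      have e : mk v k x 0 0 i = v (i+1) := by unfold mk; split_ifs <;> omega
      have := hadj i hiL
      omega
    have hvi : D L < v i + P i + D i := by have := hmkle i; omega
    have hBi := hB i hiL
    have hQi := hQ i hiL
    have hadi := hadj i hiL
    obtain ⟨c, hc⟩ : ∃ c, v i + P i + D i = D L + c := ⟨_, (Nat.add_sub_of_le hvi.le).symm⟩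
    have hcx : c + o ≤ x := by omega
    obtain ⟨y, hy⟩ : ∃ y, y + c = x := ⟨x - c, by omega⟩
    have hyi : y < v (i+1) := by
      rcases hik.lt_or_eq with h | h
      · have := hv (show i + 1 ≤ k by omega); omega
      · subst h
        have e : mk v i x 0 0 i = v i + v (i+1) - x := by unfold mk; split_ifs <;> omega
        omega
    have hin : i + 1 < n := (hn _).2 (by omega)
    obtain ⟨k', hk'1, hk'2, hk'3, hk'4, hk'5⟩ :=
      exists_k v n hn y (i+1) (by omega) (by omega)
    have hint := mk_inter v hv k' y i c hk'3 hk'4 (Or.inr ⟨by omega, by omega⟩)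
    have hui : mk v k' y i c i = v i - c := by unfold mk; split_ifs <;> omega
    have hsum : ∀ m, n ≤ m → ∑ j ∈ range m, mk v k' y i c j = D L := by
      intro m hm
      have e1 := mk_sum_gt v k' y i c (max (n+1) m) (by omega) hk'4 (Or.inr ⟨by omega, by omega⟩)
      have e2 := htot' (max (n+1) m + 1) (by omega)
      have e3 : ∑ j ∈ range m, mk v k' y i c j = ∑ j ∈ range (max (n+1) m), mk v k' y i c j := by
        apply Finset.sum_subset (Finset.range_mono (by omega))
        intro j _ hj
        simp at hj
        have := (hint j).2
        have := hzero j (by omega)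
        omega
      omega
    have hdom' : ∀ m ≤ L, D m ≤ ∑ j ∈ range m, mk v k' y i c j := by
      intro m hm
      by_cases hmi : m ≤ i
      · rw [mk_sum_le v k' y i c m (by omega) (Or.inl hmi)]
        exact hdom m (by omega)
      · by_cases hz : mk v k' y i c m = 0
        · have hz' : ∀ j, m + 1 ≤ j → v j = 0 := by
            intro j hj
            have h1 := (hint m).1
            have h2 := hv hj
            omega
          have hnm : n ≤ m + 1 := by
            by_contra hcc
            have := (hn (m+1)).1 (by omega)
            have := hz' (m+1) le_rfl
            omega
          have e := hsum (m+1) hnm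
          rw [Finset.sum_range_succ, hz] at e
          have := hDm hm
          omega
        · have hg := hgrow (mk v k' y i c) (i+1) (m - (i+1)) (fun q _ hq => by
            have h1 := (hint q).1
            have h2 := (hint m).2
            have h3 := hv (show q + 1 ≤ m by omega)
            omega)
          have e : i + 1 + (m - (i+1)) = m := by omega
          rw [e, Finset.sum_range_succ, mk_sum_le v k' y i c i (by omega) (Or.inl le_rfl), hui] at hg
          have h1 := hdom i (by omega)
          have h2 := hP i hiL
          have h3 := hD2 (L - m) m (by omega)
          have e : m + (L - m) = L := by omega
          rw [e] at h3
          omega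
    refine ⟨mk v k' y i c, hint, hsum n le_rfl, hdom', ?_, ?_, ?_⟩
    · intro j hj
      by_cases hji : j = i
      · subst hji; omega
      · have h1 := (hint j).2
        by_contra hcc
        rcases lt_or_gt_of_ne hji with h | h
        · exact hone j i h hiL (by omega) hvi
        · exact hone i j h hj hvi (by omega)
    · intro ho
      obtain ⟨h1, h2⟩ := hk'5 (by omega)
      have hvn := hzero n le_rfl
      have en : n - 1 + 1 = n := by omega
      have hvn1 := (hn (n-1)).1 (by omega)
      have hlt : mk v k' y i c (n-1) < v (n-1) := by
        unfold mk
        have : k' = n - 1 → v (k'+1) = 0 ∧ v k' = v (n-1) := by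
          intro h; rw [h, en]; exact ⟨hvn, rfl⟩
        rw [en]
        split_ifs <;> omega
      refine ⟨hlt, fun hpos => ⟨by omega, ?_, ?_⟩⟩
      · by_cases hi2 : n - 2 = i
        · rw [hi2, hui]
          have : i + 1 = n - 1 := by omega
          rw [this] at hadi
          omega
        · have hk'n : k' = n - 1 := by
            by_contra hcc
            have : mk v k' y i c (n-1) = v (n-1+1) := by unfold mk; split_ifs <;> omega
            rw [en] at this
            omega
          have : mk v k' y i c (n-2) = v (n-2) := by unfold mk; split_ifs <;> omega
          have h3 := hv (show n - 2 ≤ n - 1 by omega)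
          omega
      · have hnl : n - 1 < L := by
          by_contra hcc
          have h1 := hdom' L le_rfl
          have h2 : n = L + 1 := by omega
          have h3 := hsum n le_rfl
          rw [h2, Finset.sum_range_succ] at h3
          have : n - 1 = L := by omega
          rw [this] at hpos
          omega
        by_contra hcc
        exact hone i (n-1) (by omega) hnl hvi (by omega)
    · intro _
      refine ⟨i, by omega, ?_⟩
      have := hmkle i
      omega
  · push Not at hviol
    have hvn := hzero n le_rfl
    have en : n - 1 + 1 = n := by omega
    have hvn1 := (hn (n-1)).1 (by omega)
    by_cases hF : f ∧ k = n - 1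
    · obtain ⟨hf', hkk⟩ := hF
      obtain ⟨f1, f2, f3⟩ := hf hf'
      have hkx : x ≤ v (n-1) := hkk ▸ hk2
      have hnl : n - 1 < L := by
        by_contra hcc
        have := hDm (show L ≤ n - 1 by omega)
        omega
      have e2 : n - 2 + 1 = n - 1 := by omega
      have hq := hQ (n-1) hnl
      have hint := mk_inter v hv (n-1) (x-1) (n-2) 1 (by rw [en]; omega) (by omega)
        (Or.inr ⟨by omega, by rw [e2]; omega⟩)
      have hu1 : mk v (n-1) (x-1) (n-2) 1 (n-1) = v (n-1) - (x-1) := by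
        unfold mk
        rw [en]
        split_ifs <;> omega
      have hu2 : mk v (n-1) (x-1) (n-2) 1 (n-2) = v (n-2) - 1 := by
        unfold mk
        split_ifs <;> omega
      have hs1 : ∑ j ∈ range n, mk v (n-1) (x-1) (n-2) 1 j = D L := by
        have e1 := mk_sum_gt v (n-1) (x-1) (n-2) 1 n (by omega) (by omega)
          (Or.inr ⟨by omega, by omega⟩)
        have e2 := htot' (n+1) (by omega)
        omega
      refine ⟨mk v (n-1) (x-1) (n-2) 1, hint, hs1, ?_, ?_, ?_, ?_⟩
      · intro m hm
        rcases Nat.lt_trichotomy m (n-1) with h | h | h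
        · rw [mk_sum_le v _ _ _ _ m (by omega) (Or.inl (by omega))]
          exact hdom m (by omega)
        · subst h
          have := hs1
          rw [show n = n - 1 + 1 by omega, Finset.sum_range_succ] at this
          simp only [en] at this
          rw [hu1] at this
          omega
        · have e1 := mk_sum_gt v (n-1) (x-1) (n-2) 1 m (by omega) (by omega)
            (Or.inr ⟨by omega, by omega⟩)
          have e2 := htot' (m+1) (by omega)
          have := hDm hm
          omega
      · intro j hj
        by_cases hj1 : j = n - 1
        · subst hj1; omega
        · have h1 := hviol j hj
          have : mk v (n-1) (x-1) (n-2) 1 j ≤ mk v k x 0 0 j := by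
            subst hkk
            unfold mk
            split_ifs <;> omega
          omega
      · intro ho
        rw [hu1, hu2]
        exact ⟨by omega, fun _ => ⟨by omega, by omega, by omega⟩⟩
      · intro _
        exact ⟨n-2, by omega, by omega⟩
    · have hint := mk_inter v hv k x 0 0 (by omega) hk2 (Or.inl rfl)
      have hs1 : ∑ j ∈ range n, mk v k x 0 0 j = D L := by
        have e1 := mk_sum_gt v k x 0 0 n (by omega) hk2 (Or.inl rfl)
        have e2 := htot' (n+1) (by omega)
        omega
      have hdom' : ∀ m ≤ L, D m ≤ ∑ j ∈ range m, mk v k x 0 0 j := by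
        intro m hm
        by_cases hmk : m ≤ k
        · rw [mk_sum_le v _ _ _ _ m hmk (Or.inr rfl)]
          exact hdom m (by omega)
        · have e1 := mk_sum_gt v k x 0 0 m (by omega) hk2 (Or.inl rfl)
          have e2 := hdom (m+1) (by omega)
          rcases hm.lt_or_eq with h | h
          · have := hD m h
            omega
          · subst h; omega
      refine ⟨mk v k x 0 0, hint, hs1, hdom', hviol, ?_, ?_⟩
      · intro ho
        have hk4 : k = n - 1 → v (k+1) = 0 ∧ v k = v (n-1) := by
          intro h; rw [h, en]; exact ⟨hvn, rfl⟩
        have hlt : mk v k x 0 0 (n-1) < v (n-1) := by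
          unfold mk
          rw [en]
          split_ifs <;> omega
        refine ⟨hlt, fun hpos => ?_⟩
        have hkk : k = n - 1 := by
          by_contra hcc
          have : mk v k x 0 0 (n-1) = v (n-1+1) := by unfold mk; split_ifs <;> omega
          rw [en] at this
          omega
        have hu : mk v k x 0 0 (n-1) = v (n-1) - x := by
          have := hk4 hkk
          unfold mk
          split_ifs <;> omega
        have hnl : n - 1 < L := by
          by_contra hcc
          have h1 := hdom' L le_rfl
          have h2 : n = L + 1 := by omega
          have h3 := hs1
          rw [h2, Finset.sum_range_succ] at h3
          have : n - 1 = L := by omega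
          rw [this] at hpos
          omega
        have hb := hB (n-1) hnl
        have hq := hQ (n-1) hnl
        have hn2 : 2 ≤ n := by
          by_contra hcc
          have : n = 1 := by omega
          subst this
          simp at htot hb hq
          omega
        have hu2 : mk v k x 0 0 (n-2) = v (n-2) := by
          unfold mk
          split_ifs <;> omega
        have h3 := hv (show n - 2 ≤ n - 1 by omega)
        exact ⟨hn2, by omega, by omega⟩
      · intro hf'
        have hkk : k < n - 1 := by
          have : ¬ k = n - 1 := fun h => hF ⟨hf', h⟩
          omega
        refine ⟨k, hkk, ?_⟩
        unfold mk
        split_ifs <;> omega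
lemma sum_take_eq (l : List ℕ) (m : ℕ) : (l.take m).sum = ∑ j ∈ range m, l.getD j 0 := by
  induction m with
  | zero => simp
  | succ m ih =>
    rw [Finset.sum_range_succ, ← ih]
    by_cases h : m < l.length
    · rw [List.take_succ_eq_append_getElem h]
      simp [h]
    · rw [List.take_of_length_le (by omega), List.take_of_length_le (by omega)]
      rw [List.getD_eq_default _ _ (show l.length ≤ m by omega)]; simp

lemma sum_take_mono (l : List ℕ) : Monotone (fun m => (l.take m).sum) := by
  intro m m' h
  simp only [sum_take_eq]
  exact Finset.sum_le_sum_of_subset (Finset.range_mono h)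

lemma sum_take_le (l : List ℕ) (m : ℕ) : (l.take m).sum ≤ l.sum := by
  have := sum_take_mono l (show m ≤ max m l.length by omega)
  simp only at this
  rwa [List.take_of_length_le (show l.length ≤ max m l.length by omega)] at this

/-- word of a horizontal strip -/
def blk (c : ℕ → ℕ) : ℕ → List ℕ
  | 0 => []
  | n+1 => List.replicate (c n) (n+1) ++ blk c n

lemma blk_length (c : ℕ → ℕ) (n : ℕ) : (blk c n).length = ∑ j ∈ range n, c j := by
  induction n with
  | zero => simp [blk]
  | succ n ih => rw [Finset.sum_range_succ, blk]; simp [ih]; omega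

lemma blk_mem (c : ℕ → ℕ) (n x : ℕ) (h : x ∈ blk c n) : 1 ≤ x ∧ x ≤ n := by
  induction n with
  | zero => simp [blk] at h
  | succ n ih =>
    rw [blk, List.mem_append] at h
    rcases h with h | h
    · have := List.eq_of_mem_replicate h; omega
    · have := ih h; omega

lemma blk_count (c : ℕ → ℕ) (n j : ℕ) : (blk c n).count (j+1) = if j < n then c j else 0 := by
  induction n with
  | zero => simp [blk]
  | succ n ih =>
    rw [blk, List.count_append, ih, List.count_replicate]
    by_cases h : n = j
    · subst h; simp
    · have : ¬ (n + 1 == j + 1) = true := by simp [h]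
      rw [if_neg this]
      split_ifs <;> omega

lemma blk_count_zero (c : ℕ → ℕ) (n : ℕ) : (blk c n).count 0 = 0 := by
  rw [List.count_eq_zero]
  intro h
  have := blk_mem c n 0 h
  omega

lemma blk_sorted (c : ℕ → ℕ) (n : ℕ) : (blk c n).Pairwise (· ≥ ·) := by
  induction n with
  | zero => simp [blk]
  | succ n ih =>
    rw [blk, List.pairwise_append]
    refine ⟨List.pairwise_replicate.2 (Or.inr le_rfl), ih, ?_⟩
    intro x hx y hy
    have := List.eq_of_mem_replicate hx
    have := blk_mem c n y hy
    omega

lemma blk_head (c : ℕ → ℕ) (n : ℕ) (hn : 1 ≤ n) (h : 0 < c (n-1)) : (blk c n).getD 0 0 = n := by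
  obtain ⟨m, rfl⟩ : ∃ m, n = m + 1 := ⟨n - 1, by omega⟩
  simp at h
  obtain ⟨t, ht⟩ : ∃ t, c m = t + 1 := ⟨c m - 1, by omega⟩
  simp [blk, ht, List.replicate_succ]

lemma sorted_getD (b : List ℕ) (h : b.Pairwise (· ≥ ·)) (i j : ℕ) (hij : i ≤ j) :
    b.getD j 0 ≤ b.getD i 0 := by
  rcases hij.lt_or_eq with hij | rfl
  · by_cases hj : j < b.length
    · have := (List.pairwise_iff_getElem.1 h) i j (by omega) hj hij
      simp [hj, show i < b.length by omega]
      exact this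
    · rw [List.getD_eq_default _ _ (by omega)]; omega
  · exact le_rfl

lemma ribbon_append (a : List ℕ) (x : ℕ) (ov : ℕ → Bool) (w b : List ℕ)
    (hw : IsRibbonWord a ov w) (hb : b.length = x) (hs : b.Pairwise (· ≥ ·))
    (hpos : ∀ y ∈ a, 0 < y)
    (ho : a ≠ [] → ov (a.length - 1) = true → w.getD (a.sum - 1) 0 < b.getD 0 0) :
    IsRibbonWord (a ++ [x]) ov (w ++ b) := by
  obtain ⟨h1, h2, h3⟩ := hw
  have hro : ∀ i, i ≤ a.length → rowOffset (a ++ [x]) i = rowOffset a i := by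
    intro i hi
    unfold rowOffset
    rw [List.take_append_of_le_length hi]
  have hroL : rowOffset a a.length = a.sum := by unfold rowOffset; simp
  have hrs : ∀ i, i < a.length → rowOffset a (i+1) = rowOffset a i + a.getD i 0 := by
    intro i hi
    unfold rowOffset
    rw [sum_take_eq, sum_take_eq, Finset.sum_range_succ]
  have hrle : ∀ i, rowOffset a i ≤ a.sum := fun i => sum_take_le a i
  refine ⟨by simp [h1, hb], ?_, ?_⟩
  · intro i j hi hj
    simp at hi
    rw [hro i (by omega)]
    rcases (show i ≤ a.length by omega).lt_or_eq with h | h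
    · have e : (a ++ [x]).getD i 0 = a.getD i 0 := by rw [List.getD_append _ _ _ _ h]
      rw [e] at hj
      have := hrs i h
      have := hrle (i+1)
      rw [List.getD_append _ _ _ _ (by omega), List.getD_append _ _ _ _ (by omega)]
      exact h2 i j h hj
    · subst h
      rw [hroL, List.getD_append_right _ _ _ _ (by omega), List.getD_append_right _ _ _ _ (by omega)]
      exact sorted_getD b hs _ _ (by omega)
  · intro i hi hov
    simp at hi
    rw [hro (i+1) (by omega)]
    have := hrs i (by omega)
    have hai : 0 < a.getD i 0 := by
      rw [List.getD_eq_getElem _ _ (by omega)]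
      exact hpos _ (List.getElem_mem _)
    rcases (show i + 1 ≤ a.length by omega).lt_or_eq with h | h
    · have e2 := hrs (i+1) h
      have e3 := hrle (i+2)
      have hai2 : 0 < a.getD (i+1) 0 := by
        rw [List.getD_eq_getElem _ _ (by omega)]
        exact hpos _ (List.getElem_mem _)
      simp only [show i + 2 = i + 1 + 1 from rfl] at e3
      rw [List.getD_append _ _ _ _ (by omega), List.getD_append _ _ _ _ (by omega)]
      exact h3 i h hov
    · have e4 := hrle (i+1)
      have e5 : rowOffset a (i+1) = a.sum := by rw [h, hroL]
      rw [e5, List.getD_append _ _ _ _ (by omega), List.getD_append_right _ _ _ _ (by omega)]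
      have : a.sum - w.length = 0 := by omega
      rw [this]
      refine ho ?_ ?_
      · intro hnil; subst hnil; simp at h
      · rw [← h]; simpa using hov

lemma yam_append (w b : List ℕ) (v' v : ℕ → ℕ) (hw : IsYam w)
    (hc : ∀ j, w.count (j+1) = v' j) (hb : ∀ j, b.count (j+1) + v' j = v j)
    (hi : ∀ j, v (j+1) ≤ v' j) : IsYam (w ++ b) := by
  intro k j
  rw [List.take_append, List.count_append, List.count_append]
  by_cases h : k ≤ w.length
  · have : k - w.length = 0 := by omega
    rw [this]
    simpa using hw k j
  · rw [List.take_of_length_le (by omega)]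
    have h1 := hc (j+1)
    have h2 := hc j
    have h3 := hb (j+1)
    have h4 := hi j
    have h5 : (b.take (k - w.length)).count (j+2) ≤ b.count (j+2) :=
      (List.take_sublist _ _).count_le _
    simp only [show j + 1 + 1 = j + 2 from rfl] at *
    omega

/-- number of overlapping gaps at positions `≥ i` among `len` rows -/
def Pc (ov : ℕ → Bool) (len i : ℕ) : ℕ := ((Finset.Ico i (len-1)).filter (fun j => ov j = true)).card

lemma Pc_le (ov : ℕ → Bool) (len i : ℕ) : Pc ov len i ≤ len - 1 - i := by
  unfold Pc
  exact (Finset.card_filter_le _ _).trans (by simp)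

lemma Pc_succ (ov : ℕ → Bool) (L i : ℕ) (h : i < L) :
    Pc ov (L+1) i = Pc ov L i + (if ov (L-1) = true then 1 else 0) := by
  obtain ⟨M, rfl⟩ : ∃ M, L = M + 1 := ⟨L - 1, by omega⟩
  unfold Pc
  simp only [Nat.add_sub_cancel]
  rw [← Finset.insert_Ico_right_eq_Ico_add_one (by omega), Finset.filter_insert]
  split_ifs with h
  · rw [Finset.card_insert_of_notMem (by simp)]
  · rfl

lemma key (ov : ℕ → Bool) (a : List ℕ) : a.Pairwise (· ≥ ·) → (∀ x ∈ a, 2 ≤ x) →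
    ∀ (v : ℕ → ℕ) (n : ℕ) (f : Prop), Antitone v → (∀ i, i < n ↔ 0 < v i) →
    ∑ i ∈ range n, v i = a.sum → (∀ m ≤ a.length, (a.take m).sum ≤ ∑ i ∈ range m, v i) →
    (∀ i < a.length, v i + Pc ov a.length i + (a.take i).sum ≤ a.sum) →
    (f → 2 ≤ n ∧ v (n-1) < v (n-2) ∧
      v (n-1) + Pc ov a.length (n-1) + 1 + (a.take (n-1)).sum ≤ a.sum) →
    ∃ w, IsRibbonWord a ov w ∧ IsYam w ∧ (∀ j, w.count (j+1) = v j) ∧ w.count 0 = 0 ∧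
      (f → w.getD (a.sum - 1) 0 < n) := by
  induction a using List.reverseRecOn with
  | nil =>
    intro _ _ v n f _ hn hs _ _ hf
    have hn0 : n = 0 := by
      by_contra hc
      have h1 := (hn 0).1 (by omega)
      have h2 := Finset.single_le_sum (f := v) (s := range n) (fun _ _ => Nat.zero_le _)
        (show 0 ∈ range n by simp; omega)
      simp at hs
      have := hs 0 (by omega)
      omega
    subst hn0
    refine ⟨[], ⟨by simp, by simp, by simp⟩, by intro k j; simp, ?_, by simp, ?_⟩
    · intro j
      have := (hn j).not.1 (by omega)
      simp
      omega
    · intro h; have := hf h; omega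
  | append_singleton a x ih =>
    intro hsort hge v n f hv hn htot hdom hB hf
    have hsort' := List.pairwise_append.1 hsort
    have hge' : ∀ y ∈ a, 2 ≤ y := fun y hy => hge y (by simp [hy])
    have hx : 2 ≤ x := hge x (by simp)
    have hlen : (a ++ [x]).length = a.length + 1 := by simp
    rw [hlen] at hdom hB hf
    set L := a.length with hL
    have htk : ∀ m ≤ L, ((a ++ [x]).take m).sum = (a.take m).sum := by
      intro m hm
      rw [List.take_append_of_le_length hm]
    have hDL1 : ((a ++ [x]).take (L+1)).sum = a.sum + x := by
      rw [List.take_of_length_le (by simp [hL])]; simp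
    have hDL : (a.take L).sum = a.sum := by rw [List.take_of_length_le (by omega)]
    have hsum1 : (a ++ [x]).sum = a.sum + x := by simp
    rw [hsum1] at hB hf htot
    obtain ⟨v', hint, htot', hdom', hB', ho', hf'⟩ :=
      step L n x (if 0 < L ∧ ov (L-1) = true then 1 else 0) (fun m => ((a ++ [x]).take m).sum)
        (Pc ov L) (Pc ov (L+1)) v f (sum_take_mono _)
        (by
          intro m hm
          rw [htk m (by omega), htk (m+1) (by omega), sum_take_eq, sum_take_eq,
            Finset.sum_range_succ]
          have : x ≤ a.getD m 0 := by
            rw [List.getD_eq_getElem _ _ hm]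
            exact hsort'.2.2 _ (List.getElem_mem _) x (by simp)
          omega) hx
        (by rw [hDL1, htk L le_rfl, hDL])
        (by intro i hi; have := Pc_le ov L i; omega)
        (by
          intro i hi
          rw [Pc_succ ov L i hi]
          simp [show 0 < L by omega])
        (by constructor
            · split_ifs <;> omega
            · intro h; simp [h])
        hv hn (by rw [hDL1]; exact htot)
        hdom
        (by intro i hi; rw [hDL1]; exact hB i (by omega))
        (by
          intro h
          rw [hDL1]
          exact hf h)
    rw [htk L le_rfl, hDL] at htot'
    have hn1 : 1 ≤ n := by
      by_contra hc
      have : n = 0 := by omega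
      subst this
      simp at htot
      omega
    have en : n - 1 + 1 = n := by omega
    have hvz : ∀ j, n ≤ j → v j = 0 := fun j hj => by
      have := (hn j).not.1 (by omega); omega
    have hv'z : ∀ j, n ≤ j → v' j = 0 := fun j hj => by
      have := (hint j).2; have := hvz j hj; omega
    have hv'pos : ∀ j, j < n - 1 → 0 < v' j := fun j hj => by
      have := (hint j).1; have := (hn (j+1)).1 (by omega); omega
    -- the new length
    obtain ⟨n', hn', hn'c⟩ : ∃ n', (∀ i, i < n' ↔ 0 < v' i) ∧
        ((n' = n ∧ 0 < v' (n-1)) ∨ (n' = n - 1 ∧ v' (n-1) = 0)) := by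
      by_cases h : 0 < v' (n-1)
      · refine ⟨n, ?_, Or.inl ⟨rfl, h⟩⟩
        intro i
        constructor
        · intro hi
          by_cases h' : i = n - 1
          · rw [h']; exact h
          · exact hv'pos i (by omega)
        · intro hi
          by_contra hc
          have := hv'z i (by omega)
          omega
      · refine ⟨n - 1, ?_, Or.inr ⟨rfl, by omega⟩⟩
        intro i
        constructor
        · exact hv'pos i
        · intro hi
          by_contra hc
          by_cases h' : i = n - 1
          · rw [h'] at hi; omega
          · have := hv'z i (by omega)
            omega
    have hsn' : ∑ i ∈ range n', v' i = a.sum := by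
      rw [← htot']
      apply Finset.sum_subset (Finset.range_mono (by omega))
      intro j _ hj
      have := (hn' j).not.1 (by simpa using hj)
      omega
    obtain ⟨w, hw1, hw2, hw3, hw4, hw5⟩ := ih hsort'.1 hge' v' n'
      ((0 < L ∧ ov (L-1) = true) ∧ n' = n)
      (antitone_nat_of_succ_le (fun i => (hint (i+1)).2.trans (hint i).1)) hn' hsn'
      (by
        intro m hm
        have := hdom' m hm
        rwa [htk m hm] at this)
      (by
        intro i hi
        have := hB' i hi
        rwa [htk L le_rfl, hDL, htk i (by omega)] at this)
      (by
        rintro ⟨hov, rfl⟩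
        have h1 := ho' (by rw [if_pos hov])
        have h2 : 0 < v' (n'-1) := by
          rcases hn'c with h | h
          · exact h.2
          · omega
        obtain ⟨h3, h4, h5⟩ := h1.2 h2
        rw [htk L le_rfl, hDL] at h5
        have hnL : n' - 1 ≤ L := by
          by_contra hc
          have := sum_take_mono (a ++ [x]) (show L + 1 ≤ n' - 1 by omega)
          simp only at this
          rw [hDL1] at this
          omega
        rw [htk _ hnL] at h5
        exact ⟨h3, h4, h5⟩)
    set c : ℕ → ℕ := fun j => v j - v' j with hc
    have hbc : ∀ j, (blk c n).count (j+1) + v' j = v j := by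
      intro j
      rw [blk_count]
      have := (hint j).2
      by_cases h : j < n
      · simp only [h, if_true, hc]; omega
      · have := hvz j (by omega)
        simp only [h, if_false]; omega
    have hbl : (blk c n).length = x := by
      rw [blk_length]
      have : ∑ j ∈ range n, c j + ∑ j ∈ range n, v' j = ∑ j ∈ range n, v j := by
        rw [← Finset.sum_add_distrib]
        apply Finset.sum_congr rfl
        intro j _
        have := (hint j).2
        simp only [hc]; omega
      omega
    have hwlen := hw1.1
    refine ⟨w ++ blk c n, ?_, ?_, ?_, ?_, ?_⟩
    · refine ribbon_append a x ov w _ hw1 hbl (blk_sorted c n)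
        (fun y hy => by have := hge' y hy; omega) ?_
      intro hne hov
      have hLpos : 0 < L := List.length_pos_iff.2 hne
      have h1 := ho' (by rw [if_pos ⟨hLpos, hov⟩])
      rw [blk_head c n hn1 (by simp only [hc]; omega)]
      rcases hn'c with h | h
      · have := hw5 ⟨⟨hLpos, hov⟩, h.1⟩
        omega
      · by_contra hcc
        have hlt : a.sum - 1 < w.length := by
          rw [hwlen]
          have : a.getD 0 0 ≤ a.sum := by
            have := sum_take_le a 1
            rw [sum_take_eq] at this
            simpa using this
          have h2 : 2 ≤ a.getD 0 0 := by
            rw [List.getD_eq_getElem _ _ hLpos]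
            exact hge' _ (List.getElem_mem _)
          omega
        have hmem : w.getD (a.sum - 1) 0 ∈ w := by
          rw [List.getD_eq_getElem _ _ hlt]; exact List.getElem_mem _
        have hcp := List.count_pos_iff.2 hmem
        obtain ⟨t, ht⟩ : ∃ t, w.getD (a.sum - 1) 0 = t + 1 := ⟨w.getD (a.sum - 1) 0 - 1, by omega⟩
        rw [ht, hw3 t] at hcp
        have := (hn' t).2 hcp
        omega
    · exact yam_append w _ v' v hw2 hw3 hbc (fun j => (hint j).1)
    · intro j
      rw [List.count_append, hw3, add_comm, hbc]
    · rw [List.count_append, hw4, blk_count_zero]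
    · intro hff
      obtain ⟨j, hj, hj2⟩ := hf' hff
      rw [hsum1, List.getD_append_right _ _ _ _ (by omega)]
      have e : a.sum + x - 1 - w.length = x - 1 := by omega
      rw [e]
      have hmem : j + 1 ∈ blk c n := by
        rw [← List.count_pos_iff, blk_count, if_pos (by omega)]
        simp only [hc]; omega
      obtain ⟨t, ht, hte⟩ := List.getElem_of_mem hmem
      have := sorted_getD _ (blk_sorted c n) t (x-1) (by omega)
      rw [List.getD_eq_getElem _ _ ht, hte] at this
      omega
section words
variable (a : List ℕ) (ov : ℕ → Bool) (w : List ℕ)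

lemma count_take_le_mem (k c : ℕ) (h : 0 < (w.take k).count c) :
    ∃ t, t < k ∧ t < w.length ∧ w.getD t 0 = c := by
  have := List.count_pos_iff.1 h
  obtain ⟨t, ht, hte⟩ := List.getElem_of_mem this
  simp at ht
  refine ⟨t, by omega, by omega, ?_⟩
  rw [List.getD_eq_getElem _ _ (by omega), ← hte]
  simp

lemma rowOffset_succ (i : ℕ) : rowOffset a (i+1) = rowOffset a i + a.getD i 0 := by
  unfold rowOffset
  rw [sum_take_eq, sum_take_eq, Finset.sum_range_succ]

/-- letters in the first `m` rows are at most `m`. -/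
lemma letters_le (hw : IsRibbonWord a ov w) (hy : IsYam w) (m : ℕ) (hm : m ≤ a.length) :
    ∀ t < rowOffset a m, w.getD t 0 ≤ m := by
  induction m with
  | zero => intro t ht; simp [rowOffset] at ht
  | succ m ih =>
    have ih := ih (by omega)
    intro t ht
    obtain ⟨h1, h2, h3⟩ := hw
    have hro := rowOffset_succ a m
    have hle : rowOffset a (m+1) ≤ a.sum := sum_take_le a (m+1)
    by_cases htm : t < rowOffset a m
    · have := ih t htm; omega
    · -- first letter of row
      have hfirst : w.getD (rowOffset a m) 0 ≤ m + 1 := by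
        by_contra hc
        set s := rowOffset a m with hs
        obtain ⟨j, hj⟩ : ∃ j, w.getD s 0 = j + 2 := ⟨w.getD s 0 - 2, by omega⟩
        have hsl : s < w.length := by omega
        have hyy := hy (s+1) j
        rw [List.take_succ_eq_append_getElem hsl, List.count_append, List.count_append] at hyy
        rw [List.getD_eq_getElem _ _ hsl] at hj
        rw [hj] at hyy
        have e1 : List.count (j+2) [j+2] = 1 := by simp
        have e2 : List.count (j+1) [j+2] = 0 := by simp
        rw [e1, e2] at hyy
        obtain ⟨t', ht1, ht2, ht3⟩ := count_take_le_mem w s (j+1) (by omega)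
        have := ih t' ht1
        rw [List.getD_eq_getElem _ _ hsl] at hc
        omega
      have hrow : ∀ u, u < a.getD m 0 → w.getD (rowOffset a m + u) 0 ≤ m + 1 := by
        intro u
        induction u with
        | zero => intro _; simpa using hfirst
        | succ u ihu =>
          intro hu
          have := ihu (by omega)
          have := h2 m u (by omega) (by omega)
          rw [← add_assoc]
          omega
      have := hrow (t - rowOffset a m) (by omega)
      rwa [show rowOffset a m + (t - rowOffset a m) = t by omega] at this

lemma sum_count_eq (l : List ℕ) (m : ℕ) (h0 : l.count 0 = 0) (h : ∀ x ∈ l, x ≤ m) :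
    ∑ j ∈ range m, l.count (j+1) = l.length := by
  induction l with
  | nil => simp
  | cons x l ih =>
    rw [List.count_cons] at h0
    have hx0 : x ≠ 0 := by
      intro h; subst h; simp at h0
    have hxm := h x (by simp)
    have := ih (by omega) (fun y hy => h y (by simp [hy]))
    simp only [List.count_cons, Finset.sum_add_distrib, List.length_cons]
    rw [this]
    congr 1
    rw [Finset.sum_eq_single (x-1)]
    · simp; omega
    · intro b _ hb; simp; omega
    · intro hb; simp at hb; omega

lemma dom_of_word (hw : IsRibbonWord a ov w) (hy : IsYam w) (h0 : w.count 0 = 0)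
    (m : ℕ) (hm : m ≤ a.length) :
    (a.take m).sum ≤ ∑ j ∈ range m, w.count (j+1) := by
  have hle : rowOffset a m ≤ a.sum := sum_take_le a m
  have hl : (w.take (rowOffset a m)).length = rowOffset a m := by
    simp [hw.1, hle]
  have h1 := sum_count_eq (w.take (rowOffset a m)) m
    (by have := (List.take_sublist (rowOffset a m) w).count_le 0; omega)
    (by
      intro x hx
      obtain ⟨t, _, ht2⟩ := count_take_le_mem w _ _ (List.count_pos_iff.2 hx)
      rw [← ht2.2]
      exact letters_le a ov w hw hy m hm t (by omega))
  rw [hl] at h1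
  change rowOffset a m ≤ _
  rw [← h1]
  apply Finset.sum_le_sum
  intro j _
  exact (List.take_sublist _ _).count_le _

lemma count_eq_card (l : List ℕ) (c : ℕ) :
    l.count c = ((range l.length).filter (fun t => l.getD t 0 = c)).card := by
  induction l using List.reverseRecOn with
  | nil => simp
  | append_singleton l x ih =>
    rw [List.count_append, ih, List.length_append, List.length_singleton,
      Finset.range_add_one, Finset.filter_insert]
    have e1 : (range l.length).filter (fun t => (l ++ [x]).getD t 0 = c) =
        (range l.length).filter (fun t => l.getD t 0 = c) := by
      apply Finset.filter_congr
      intro t ht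
      rw [List.getD_append _ _ _ _ (by simpa using ht)]
    have e2 : (l ++ [x]).getD l.length 0 = x := by
      rw [List.getD_append_right _ _ _ _ le_rfl]; simp
    rw [e1, e2]
    split_ifs with h
    · rw [Finset.card_insert_of_notMem (by simp)]; simp [h]
    · simp [h]

lemma bound_of_word (h2 : ∀ x ∈ a, 2 ≤ x) (hw : IsRibbonWord a ov w) (hy : IsYam w)
    (i : ℕ) (hi : i < a.length) :
    w.count (i+1) + Pc ov a.length i + (a.take i).sum ≤ a.sum := by
  have hlet := letters_le a ov w hw hy i hi.le
  obtain ⟨h1, -, h3⟩ := hw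
  have hpart : ∀ j < a.length, 2 ≤ a.getD j 0 := fun j hj => by
    rw [List.getD_eq_getElem _ _ hj]; exact h2 _ (List.getElem_mem _)
  have hmono : ∀ j j', j ≤ j' → rowOffset a j ≤ rowOffset a j' := fun j j' h => sum_take_mono a h
  have hle : ∀ m, rowOffset a m ≤ a.sum := sum_take_le a
  rw [count_eq_card, h1]
  unfold Pc
  set G := (Finset.Ico i (a.length-1)).filter (fun j => ov j = true) with hG
  let φ : ℕ → ℕ := fun j => if w.getD (rowOffset a (j+1)) 0 = i + 1 then rowOffset a (j+1) - 1
    else rowOffset a (j+1)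
  have hGm : ∀ j ∈ G, i ≤ j ∧ j + 1 < a.length ∧ ov j = true := by
    intro j hj
    simp [hG] at hj
    exact ⟨hj.1.1, by omega, hj.2⟩
  have hφ : ∀ j, φ j = rowOffset a (j+1) - 1 ∨ φ j = rowOffset a (j+1) := by
    intro j; simp only [φ]; split_ifs <;> simp
  have hlt : ∀ j ∈ G, ∀ j' ∈ G, j < j' → φ j < φ j' := by
    intro j hj j' hj' hjj
    have e1 := hGm j hj
    have e2 := hGm j' hj'
    have e3 := hmono (j+2) (j'+1) (by omega)
    have e4 := rowOffset_succ a (j+1)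
    have e5 := hpart (j+1) e1.2.1
    rcases hφ j with h | h <;> rcases hφ j' with h' | h' <;> rw [h, h'] <;>
      simp only [show j + 1 + 1 = j + 2 from rfl] at * <;> omega
  have hinj : Set.InjOn φ G := by
    intro j hj j' hj' he
    rcases Nat.lt_trichotomy j j' with h | h | h
    · have := hlt j hj j' hj' h; omega
    · exact h
    · have := hlt j' hj' j hj h; omega
  rw [← Finset.card_image_of_injOn hinj]
  have hdis1 : Disjoint ((range a.sum).filter (fun t => w.getD t 0 = i+1)) (G.image φ) := by
    rw [Finset.disjoint_left]
    intro t ht1 ht2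
    simp only [Finset.mem_filter] at ht1
    obtain ⟨j, hj, rfl⟩ := Finset.mem_image.1 ht2
    obtain ⟨e1, e2, e3⟩ := hGm j hj
    have := h3 j e2 e3
    have ht := ht1.2
    simp only [φ] at ht
    split_ifs at ht <;> omega
  have hcard : ((range a.sum).filter (fun t => w.getD t 0 = i+1) ∪ G.image φ).card ≤
      (Finset.Ico (rowOffset a i) a.sum).card := by
    apply Finset.card_le_card
    intro t ht
    rw [Finset.mem_union] at ht
    rw [Finset.mem_Ico]
    rcases ht with ht | ht
    · simp only [Finset.mem_filter, Finset.mem_range] at ht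
      refine ⟨?_, ht.1⟩
      by_contra hc
      have := hlet t (by omega)
      omega
    · obtain ⟨j, hj, rfl⟩ := Finset.mem_image.1 ht
      obtain ⟨e1, e2, e3⟩ := hGm j hj
      have e4 := hmono i j e1
      have e5 := rowOffset_succ a j
      have e6 := rowOffset_succ a (j+1)
      have e7 := hpart j (by omega)
      have e8 := hpart (j+1) e2
      have e9 := hle (j+1+1)
      rcases hφ j with h | h <;> rw [h] <;> omega
  rw [Finset.card_union_of_disjoint hdis1, Nat.card_Ico] at hcard
  have := hle i
  change _ + rowOffset a i ≤ _
  omega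

end words

lemma overlap_Pc (a p : List ℕ) (hp : IsOverlapSeq a p) (i : ℕ) :
    p.getD i 0 = Pc (ovOf p) a.length i := by
  obtain ⟨h1, h2, h3⟩ := hp
  by_cases hi : a.length - 1 ≤ i
  · have : Pc (ovOf p) a.length i = 0 := by
      have := Pc_le (ovOf p) a.length i; omega
    rw [this]
    rcases hi.lt_or_eq with h | h
    · rw [List.getD_eq_default _ _ (by omega)]
    · rw [← h]; exact h2
  · obtain ⟨t, ht⟩ : ∃ t, i + t = a.length - 1 := ⟨a.length - 1 - i, by omega⟩
    clear hi
    induction t generalizing i with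
    | zero =>
      have : Pc (ovOf p) a.length i = 0 := by
        have := Pc_le (ovOf p) a.length i; omega
      rw [this, show i = a.length - 1 by omega]; exact h2
    | succ t ih =>
      have h4 := ih (i+1) (by omega)
      have h5 := h3 i (by omega)
      have h6 : Pc (ovOf p) a.length i = Pc (ovOf p) a.length (i+1) +
          (if ovOf p i = true then 1 else 0) := by
        unfold Pc
        rw [← Finset.insert_Ico_add_one_left_eq_Ico (show i < a.length - 1 by omega),
          Finset.filter_insert]
        split_ifs with h
        · rw [Finset.card_insert_of_notMem (by simp)]
        · rfl
      rw [h6, ← h4]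
      unfold ovOf
      simp only [decide_eq_true_eq]
      split_ifs <;> omega

lemma partition_fun (nu : List ℕ) (h : IsPartition nu) :
    Antitone (fun j => nu.getD j 0) ∧ ∀ i, i < nu.length ↔ 0 < nu.getD i 0 := by
  refine ⟨fun i j hij => sorted_getD nu h.1 i j hij, ?_⟩
  intro i
  constructor
  · intro hi
    rw [List.getD_eq_getElem _ _ hi]
    exact h.2 _ (List.getElem_mem _)
  · intro hi
    by_contra hc
    rw [List.getD_eq_default _ _ (by omega)] at hi
    omega

lemma support_iff (a p nu : List ℕ) (ha : IsPartition a) (h2 : PartsGE a 2)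
    (hp : IsOverlapSeq a p) (hnu : IsPartition nu) :
    InSupport a p nu ↔ DomLE a nu ∧
      ∀ i < a.length, nu.getD i 0 + p.getD i 0 + (a.take i).sum ≤ a.sum := by
  obtain ⟨hanti, hlen⟩ := partition_fun nu hnu
  constructor
  · rintro ⟨w, hw, hy, hc, hc0⟩
    have hall : w.length = nu.sum := by
      obtain ⟨M, hM1, hM2⟩ : ∃ M, nu.length ≤ M ∧ ∀ x ∈ w, x ≤ M := by
        refine ⟨nu.length, le_rfl, ?_⟩
        intro x hx
        have h1 := List.count_pos_iff.2 hx
        have hx0 : x ≠ 0 := by rintro rfl; omega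
        obtain ⟨t, rfl⟩ : ∃ t, x = t + 1 := ⟨x - 1, by omega⟩
        rw [hc t] at h1
        have := (hlen t).2 h1
        omega
      have := sum_count_eq w M hc0 hM2
      simp only [hc] at this
      rw [← this, ← sum_take_eq, List.take_of_length_le hM1]
    refine ⟨⟨by rw [← hall, hw.1], ?_⟩, ?_⟩
    · have hd : ∀ m ≤ a.length, (a.take m).sum ≤ (nu.take m).sum := by
        intro m hm
        have := dom_of_word a _ w hw hy hc0 m hm
        simp only [hc] at this
        rwa [sum_take_eq nu]
      intro m
      by_cases hm : m ≤ a.length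
      · exact hd m hm
      · have h1 := hd a.length le_rfl
        have h3 := sum_take_mono nu (show a.length ≤ m by omega)
        simp only at h3
        rw [List.take_of_length_le (show a.length ≤ m by omega)]
        rw [List.take_of_length_le le_rfl] at h1
        omega
    · intro i hi
      have := bound_of_word a _ w h2 hw hy i hi
      rw [hc] at this
      rwa [overlap_Pc a p hp i]
  · rintro ⟨hd, hb⟩
    obtain ⟨w, hw1, hw2, hw3, hw4, -⟩ := key (ovOf p) a ha.1 h2 (fun j => nu.getD j 0) nu.length
      False hanti hlen
      (by rw [← sum_take_eq, List.take_of_length_le le_rfl]; exact hd.1.symm)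
      (by intro m _; rw [← sum_take_eq]; exact hd.2 m)
      (by intro i hi; rw [← overlap_Pc a p hp i]; exact hb i hi)
      (by intro h; exact h.elim)
    exact ⟨w, hw1, hw2, hw3, hw4⟩

lemma lenp_lt (p : List ℕ) (hp : p.Pairwise (· ≥ ·)) (i : ℕ) : i < lenp p ↔ 0 < p.getD i 0 := by
  induction p generalizing i with
  | nil => simp [lenp]
  | cons x p ih =>
    rw [List.pairwise_cons] at hp
    have ih := ih hp.2
    unfold lenp at *
    by_cases hx : x = 0
    · subst hx
      have h0 : ∀ y ∈ p, y = 0 := fun y hy => by have := hp.1 y hy; omega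
      have h1 : ∀ i, p.getD i 0 = 0 := by
        intro i
        by_cases h : i < p.length
        · rw [List.getD_eq_getElem _ _ h]; exact h0 _ (List.getElem_mem _)
        · rw [List.getD_eq_default _ _ (by omega)]
      have h2 := (ih 0).not.2 (by rw [h1]; omega)
      cases i with
      | zero => simp; intro y hy; exact h0 y hy
      | succ i =>
        rw [List.getD_cons_succ, h1]
        rw [List.countP_cons_of_neg (by simp)]
        omega
    · rw [List.countP_cons_of_pos (by simp [hx])]
      cases i with
      | zero => simp; omega
      | succ i =>
        rw [List.getD_cons_succ, ← ih i]
        omega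

lemma witSize_eq (a p : List ℕ) (i : ℕ) :
    witSize a p i = ∑ j ∈ range i, (rho a p i - a.getD j 0) := by
  unfold witSize wit
  induction i generalizing p with
  | zero => simp
  | succ i _ =>
    generalize rho a p (i+1) = r
    generalize i + 1 = m
    induction m with
    | zero => simp
    | succ m ih =>
      rw [Finset.sum_range_succ, Finset.sum_Icc_succ_top (by omega), ih]
      simp

lemma overlap_sorted (a p : List ℕ) (hp : IsOverlapSeq a p) : p.Pairwise (· ≥ ·) := by
  rw [List.pairwise_iff_getElem]
  intro i j hi hj hij
  have h1 := overlap_Pc a p hp i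
  have h2 := overlap_Pc a p hp j
  rw [List.getD_eq_getElem _ _ hi] at h1
  rw [List.getD_eq_getElem _ _ hj] at h2
  rw [h1, h2]
  unfold Pc
  apply Finset.card_le_card
  apply Finset.filter_subset_filter
  apply Finset.Ico_subset_Ico hij.le le_rfl

lemma cond_iff (a p : List ℕ) (hp : IsOverlapSeq a p) :
    (lenp p < 2 ∨ (2 ≤ lenp p ∧ ∀ i, 1 ≤ i → i + 1 ≤ lenp p → p.getD i 0 ≤ witSize a p i)) ↔
      ∀ i, 1 ≤ i → p.getD i 0 ≤ witSize a p i := by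
  have hl := lenp_lt p (overlap_sorted a p hp)
  constructor
  · intro h i hi
    by_cases hip : 0 < p.getD i 0
    · have := (hl i).2 hip
      rcases h with h | h
      · omega
      · exact h.2 i hi (by omega)
    · omega
  · intro h
    by_cases h2 : lenp p < 2
    · exact Or.inl h2
    · exact Or.inr ⟨by omega, fun i hi _ => h i hi⟩

lemma tail_ge (a : List ℕ) (h2 : PartsGE a 2) (i : ℕ) :
    (a.take i).sum + 2 * (a.length - i) ≤ a.sum := by
  have h : ∀ l : List ℕ, (∀ x ∈ l, 2 ≤ x) → 2 * l.length ≤ l.sum := by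
    intro l
    induction l with
    | nil => simp
    | cons x l ih =>
      intro h
      have h1 := h x (by simp)
      have h3 := ih (fun y hy => h y (by simp [hy]))
      simp; omega
  have h1 := h (a.drop i) (fun x hx => h2 x (List.mem_of_mem_drop hx))
  have h3 : (a.take i).sum + (a.drop i).sum = a.sum := by
    rw [← List.sum_append, List.take_append_drop]
  rw [List.length_drop] at h1
  omega

lemma full_iff (a p : List ℕ) (ha : IsPartition a) (h2 : PartsGE a 2) (hp : IsOverlapSeq a p) :
    FullSupport a p ↔ ∀ nu, IsPartition nu → DomLE a nu → nu.getD 0 0 + p.getD 0 0 ≤ a.sum →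
      ∀ i < a.length, nu.getD i 0 + p.getD i 0 + (a.take i).sum ≤ a.sum := by
  have hp0 : p.getD 0 0 ≤ a.sum := by
    have h1 := Pc_le (ovOf p) a.length 0
    rw [← overlap_Pc a p hp 0] at h1
    have := tail_ge a h2 0
    simp at this
    omega
  have hint : ∀ nu, IsPartition nu →
      (InInterval a p nu ↔ DomLE a nu ∧ nu.getD 0 0 + p.getD 0 0 ≤ a.sum) := by
    intro nu hnu
    unfold InInterval
    constructor
    · rintro ⟨h1, h3⟩
      refine ⟨h1, ?_⟩
      have := h3.2 1
      rw [sum_take_eq] at this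
      simp at this
      simp at hp0
      simp
      omega
    · rintro ⟨h1, h3⟩
      refine ⟨h1, ?_, ?_⟩
      · have := h1.1
        simp at hp0
        simp; omega
      · intro m
        match m with
        | 0 => simp
        | 1 =>
          rw [sum_take_eq]
          simp at h3
          simp; omega
        | (m+2) =>
          have := sum_take_le nu (m+2)
          have := h1.1
          simp at hp0
          simp; omega
  constructor
  · intro hF nu hnu hd h0
    have : nu ∈ SupportSet a p := by
      rw [hF]
      exact ⟨hnu, (hint nu hnu).2 ⟨hd, h0⟩⟩
    exact ((support_iff a p nu ha h2 hp hnu).1 this.2).2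
  · intro h
    ext nu
    constructor
    · rintro ⟨hnu, hs⟩
      obtain ⟨h1, h3⟩ := (support_iff a p nu ha h2 hp hnu).1 hs
      refine ⟨hnu, (hint nu hnu).2 ⟨h1, ?_⟩⟩
      by_cases hl : 0 < a.length
      · simpa using h3 0 hl
      · have hnil : a = [] := List.length_eq_zero_iff.1 (by omega)
        subst hnil
        have e1 := h1.1
        have e2 := sum_take_le nu 1
        rw [sum_take_eq] at e2
        simp at e1 e2 hp0
        simp
        omega
    · rintro ⟨hnu, hi⟩
      obtain ⟨h1, h3⟩ := (hint nu hnu).1 hi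
      exact ⟨hnu, (support_iff a p nu ha h2 hp hnu).2 ⟨h1, h nu hnu h1 h3⟩⟩

lemma rho_spec (a p : List ℕ) (h2 : PartsGE a 2) (hp : IsOverlapSeq a p) (i : ℕ) :
    rho a p i + p.getD i 0 + (a.take i).sum = a.sum + 1 ∧ (a.length - i) + 1 ≤ rho a p i ∧
      p.getD i 0 ≤ a.length - 1 - i := by
  have h1 := Pc_le (ovOf p) a.length i
  rw [← overlap_Pc a p hp i] at h1
  have h3 := tail_ge a h2 i
  have h4 : (a.take i).sum + (a.drop i).sum = a.sum := by
    rw [← List.sum_append, List.take_append_drop]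
  unfold rho
  omega

lemma suff (a p : List ℕ) (ha : IsPartition a) (h2 : PartsGE a 2) (hp : IsOverlapSeq a p)
    (hc : ∀ i, 1 ≤ i → p.getD i 0 ≤ witSize a p i) (nu : List ℕ) (hnu : IsPartition nu)
    (hd : DomLE a nu) (h0 : nu.getD 0 0 + p.getD 0 0 ≤ a.sum) (i : ℕ) :
    nu.getD i 0 + p.getD i 0 + (a.take i).sum ≤ a.sum := by
  rcases Nat.eq_zero_or_pos i with rfl | hi
  · simpa using h0
  by_contra hcon
  have hci := hc i hi
  rw [witSize_eq] at hci
  obtain ⟨hr, -, -⟩ := rho_spec a p h2 hp i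
  set r := rho a p i
  have hri : r ≤ nu.getD i 0 := by omega
  have hanti := (partition_fun nu hnu).1
  have main : ∀ m ≤ i, ∑ j ∈ range m, (a.getD j 0 + (r - a.getD j 0)) ≤
      ∑ j ∈ range m, nu.getD j 0 := by
    intro m
    induction m with
    | zero => simp
    | succ m ih =>
      intro hm
      by_cases har : r ≤ a.getD m 0
      · have := hd.2 (m+1)
        rw [sum_take_eq, sum_take_eq] at this
        refine le_trans (le_of_eq ?_) this
        apply Finset.sum_congr rfl
        intro j hj
        rw [Finset.mem_range] at hj
        have := sorted_getD a ha.1 j m (by omega)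
        omega
      · have := ih (by omega)
        rw [Finset.sum_range_succ, Finset.sum_range_succ _ m]
        have h5 : nu.getD i 0 ≤ nu.getD m 0 := hanti (show m ≤ i by omega)
        omega
  have h1 := main i le_rfl
  rw [Finset.sum_add_distrib, ← sum_take_eq] at h1
  have h3 := sum_take_le nu (i+1)
  rw [sum_take_eq, Finset.sum_range_succ] at h3
  have := hd.1
  omega

lemma nec (a p : List ℕ) (ha : IsPartition a) (h2 : PartsGE a 2) (hp : IsOverlapSeq a p)
    (hF : ∀ nu, IsPartition nu → DomLE a nu → nu.getD 0 0 + p.getD 0 0 ≤ a.sum →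
      ∀ i < a.length, nu.getD i 0 + p.getD i 0 + (a.take i).sum ≤ a.sum)
    (i : ℕ) (hi : 1 ≤ i) : p.getD i 0 ≤ witSize a p i := by
  by_contra hcon
  obtain ⟨hr1, hr2, hr3⟩ := rho_spec a p h2 hp i
  rw [witSize_eq] at hcon
  set r := rho a p i with hr
  have hil : i + 1 < a.length := by omega
  obtain ⟨s, hs⟩ : ∃ s, ∑ j ∈ range i, (r - a.getD j 0) + s + 1 = p.getD i 0 :=
    ⟨p.getD i 0 - 1 - ∑ j ∈ range i, (r - a.getD j 0), by omega⟩
  let v : ℕ → ℕ := fun j => if j < i then a.getD j 0 + (r - a.getD j 0) + (if j = 0 then s else 0)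
    else r
  let nu : List ℕ := (List.range (i+1)).map v
  have hnul : nu.length = i + 1 := by simp [nu]
  have hget : ∀ j, j ≤ i → nu.getD j 0 = v j := by
    intro j hj
    rw [List.getD_eq_getElem _ _ (by omega)]
    simp [nu]
  have hvi : v i = r := by simp [v]
  have hvr : ∀ j, r ≤ v j := by
    intro j; simp only [v]; split_ifs <;> omega
  have hsums : ∀ m, 1 ≤ m → m ≤ i → (nu.take m).sum =
      (a.take m).sum + ∑ j ∈ range m, (r - a.getD j 0) + s := by
    intro m hm1 hm
    rw [sum_take_eq, sum_take_eq]
    induction m with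
    | zero => omega
    | succ m ih =>
      rw [Finset.sum_range_succ, Finset.sum_range_succ, Finset.sum_range_succ _ m, hget m (by omega)]
      rcases Nat.eq_zero_or_pos m with h0 | h0
      · subst h0
        simp [v, show 0 < i by omega]
      · rw [ih h0 (by omega)]
        have : v m = a.getD m 0 + (r - a.getD m 0) := by
          simp only [v]
          rw [if_pos (by omega), if_neg (by omega)]
          rfl
        omega
  have hsi := hsums i hi le_rfl
  have htot : nu.sum = a.sum := by
    have e : nu.sum = (nu.take (i+1)).sum := by rw [List.take_of_length_le (by omega)]
    rw [e, sum_take_eq, Finset.sum_range_succ, ← sum_take_eq, hget i le_rfl, hvi]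
    omega
  have hpart : IsPartition nu := by
    constructor
    · rw [List.pairwise_iff_getElem]
      intro j j' hj hj' hjj
      simp only [nu, List.getElem_map, List.getElem_range]
      have := sorted_getD a ha.1 j j' (by omega)
      simp only [v]
      split_ifs <;> omega
    · intro x hx
      simp only [nu, List.mem_map] at hx
      obtain ⟨j, _, rfl⟩ := hx
      have := hvr j
      omega
  have hdom : DomLE a nu := by
    refine ⟨htot.symm, ?_⟩
    intro m
    rcases Nat.eq_zero_or_pos m with h0 | h0
    · subst h0; simp
    · by_cases hm : m ≤ i
      · rw [hsums m h0 hm]; omega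
      · rw [List.take_of_length_le (show nu.length ≤ m by omega), htot]
        exact sum_take_le a m
  have h0 : nu.getD 0 0 + p.getD 0 0 ≤ a.sum := by
    -- rows `1..i` have at least `i * r` boxes
    have e : nu.sum = (nu.take (i+1)).sum := by rw [List.take_of_length_le (by omega)]
    rw [sum_take_eq, Finset.sum_range_succ'] at e
    have h3 : ∑ j ∈ range i, r ≤ ∑ j ∈ range i, nu.getD (j+1) 0 := by
      apply Finset.sum_le_sum
      intro j hj
      rw [Finset.mem_range] at hj
      rw [hget (j+1) (by omega)]
      exact hvr _
    simp only [Finset.sum_const, Finset.card_range, smul_eq_mul] at h3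
    obtain ⟨-, -, h4⟩ := rho_spec a p h2 hp 0
    have h5 : a.length - 1 ≤ i * r := by
      have : i * (a.length - i + 1) ≤ i * r := Nat.mul_le_mul_left i hr2
      obtain ⟨d, hd⟩ : ∃ d, a.length = i + d := ⟨a.length - i, by omega⟩
      rw [hd] at this ⊢
      rw [show i + d - i + 1 = d + 1 by omega] at this
      have : i + d ≤ i * (d + 1) := by nlinarith
      omega
    omega
  have := hF nu hpart hdom h0 i (by omega)
  rw [hget i le_rfl, hvi] at this
  omega

end helpers

/-- Theorem `corf`: `R_a^p` has full Schur support iff either `ℓ(p) < 2`,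
or `ℓ(p) ≥ 2` and for every `1 ≤ i ≤ ℓ(p)−1` the `i`-witness vector is oversized with respect
to its slack: `Σ_{j=1}^i [ϱ_i − a_j]₊ ≥ p_{i+1}`. -/
theorem full_support_iff_witnesses_oversized
    (a p : List ℕ) (ha : IsPartition a) (h2 : PartsGE a 2) (hp : IsOverlapSeq a p) :
    FullSupport a p ↔
      (lenp p < 2 ∨
        (2 ≤ lenp p ∧ ∀ i, 1 ≤ i → i + 1 ≤ lenp p → p.getD i 0 ≤ witSize a p i)) := by
  rw [cond_iff a p hp, full_iff a p ha h2 hp]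
  constructor
  · intro h i hi
    exact nec a p ha h2 hp h i hi
  · intro h nu hnu hd h0 i _
    exact suff a p ha h2 hp h nu hnu hd h0 i

end RibbonSupport
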